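/- arXiv:2011.04851 — 6 statements merged into one kernel-verified Lean document; each statement's English description precedes it below -/
import Mathlib

section
/- Let A be an n×n complex matrix with Ind(A) = k. If X and Y each satisfy the four m-core-EP inverse equations for A (XAX = X, X A^{k+1} = A^k, (AX)~ = AX, and X = A^k Z for some matrix Z; similarly for Y), then X = Y; i.e., the m-core-EP inverse, when it exists, is unique. -/
/-!
If `X` and `Y` are m-core-EP inverses of `A`, then `X * A` fixes the columns of `Y` and vice versa
(`IsMCoreEP.mul_mul_eq`). Hence `P = A * X` and `Q = A * Y` satisfy `P * Q = Q` and `Q * P = P`.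
Both are self-adjoint for the Minkowski adjoint, which reverses products (`madj_mul`), so taking
adjoints in `P * Q = Q` gives `Q * P = Q`, whence `P = Q` and `X = X * P = X * Q = Y`.
-/

open Matrix

noncomputable section

/-- The Minkowski metric matrix `G = diag(1, -1, …, -1)`. -/
def mink (n : ℕ) : Matrix (Fin n) (Fin n) ℂ :=
  Matrix.diagonal (fun i => if (i : ℕ) = 0 then 1 else -1)

/-- The Minkowski adjoint `A~ = G A* G`. -/
def madj {n : ℕ} (A : Matrix (Fin n) (Fin n) ℂ) : Matrix (Fin n) (Fin n) ℂ :=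
  mink n * Aᴴ * mink n

/-- `k` is the index of `A`: the smallest positive integer with
`rank (A^(k+1)) = rank (A^k)`. -/
def IsInd {n : ℕ} (A : Matrix (Fin n) (Fin n) ℂ) (k : ℕ) : Prop :=
  0 < k ∧ (A ^ (k + 1)).rank = (A ^ k).rank ∧
    ∀ j, 0 < j → (A ^ (j + 1)).rank = (A ^ j).rank → k ≤ j

/-- `X` is an m-core-EP inverse of `A` (with `Ind(A) = k`). -/
def IsMCoreEP {n : ℕ} (A X : Matrix (Fin n) (Fin n) ℂ) (k : ℕ) : Prop :=
  X * A * X = X ∧ X * A ^ (k + 1) = A ^ k ∧ madj (A * X) = A * X ∧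
    ∃ Z : Matrix (Fin n) (Fin n) ℂ, X = A ^ k * Z

theorem mink_mul_mink (n : ℕ) : mink n * mink n = 1 := by
  rw [mink, Matrix.diagonal_mul_diagonal, ← Matrix.diagonal_one]
  congr 1
  funext i
  split_ifs <;> norm_num

/-- The Minkowski adjoint reverses products, since the metric matrix is an involution. -/
theorem madj_mul {n : ℕ} (P Q : Matrix (Fin n) (Fin n) ℂ) :
    madj (P * Q) = madj Q * madj P := by
  calc madj (P * Q) = mink n * Qᴴ * 1 * Pᴴ * mink n := by
        simp only [madj, Matrix.conjTranspose_mul, Matrix.mul_one, Matrix.mul_assoc]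
    _ = madj Q * madj P := by
        simp only [← mink_mul_mink n, madj, Matrix.mul_assoc]

/-- The column space of `Y` lies in that of `A ^ k`, on which `X * A` acts as the identity. -/
theorem IsMCoreEP.mul_mul_eq {n k : ℕ} {A X Y : Matrix (Fin n) (Fin n) ℂ}
    (hX : IsMCoreEP A X k) (hY : IsMCoreEP A Y k) : X * A * Y = Y := by
  obtain ⟨-, hXA, -, -⟩ := hX
  obtain ⟨-, -, -, Z, rfl⟩ := hY
  rw [← Matrix.mul_assoc, Matrix.mul_assoc X, ← pow_succ', hXA]

/-- The m-core-EP inverse, when it exists, is unique. -/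
theorem mCoreEP_unique {n k : ℕ} (A X Y : Matrix (Fin n) (Fin n) ℂ)
    (hk : IsInd A k) (hX : IsMCoreEP A X k) (hY : IsMCoreEP A Y k) : X = Y := by
  have hPQ : (A * X) * (A * Y) = A * Y := by
    rw [Matrix.mul_assoc, ← Matrix.mul_assoc X, hX.mul_mul_eq hY]
  have hQP : (A * Y) * (A * X) = A * X := by
    rw [Matrix.mul_assoc, ← Matrix.mul_assoc Y, hY.mul_mul_eq hX]
  have hAXY : A * X = A * Y := by
    rw [← hQP]
    simpa only [madj_mul, hX.2.2.1, hY.2.2.1] using congrArg madj hPQ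
  rw [← hX.1, Matrix.mul_assoc, hAXY, ← Matrix.mul_assoc, hX.mul_mul_eq hY]
end
end

section
/- Let A be an n×n complex matrix with Ind(A) = k and let X be an m-core-EP inverse of A. Then rank(X) = rank(X²) = rank(A^k), and the column space of X equals the column space of A^k. -/
/-!
The argument uses only `X A^(k+1) = A^k` and `X = A^k Z`. These two factorizations give the two
inclusions between the column spaces of `X` and `A^k`. Moreover, multiplying the first on the right
by `A` and on the left by `X` yields `X² A^(k+2) = A^k`, so
`rank (A^k) ≤ rank (X²) ≤ rank X ≤ rank (A^k)`, and equality holds throughout.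
-/

open Matrix

noncomputable section

/-- An m-core-EP inverse `X` of `A` satisfies `rank X = rank (X²) = rank (A^k)`
and has the same column space as `A^k`. -/
theorem mCoreEP_rank_range {n k : ℕ} (A X : Matrix (Fin n) (Fin n) ℂ)
    (hk : IsInd A k) (hX : IsMCoreEP A X k) :
    X.rank = (X ^ 2).rank ∧ (X ^ 2).rank = (A ^ k).rank ∧
      LinearMap.range X.mulVecLin = LinearMap.range (A ^ k).mulVecLin := by
  obtain ⟨-, h2, -, Z, hZ⟩ := hX
  have hsq : X ^ 2 * A ^ (k + 2) = A ^ k := by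
    calc X ^ 2 * A ^ (k + 2) = X * (X * A ^ (k + 1)) * A := by
          rw [pow_succ A (k + 1), pow_two]; simp only [Matrix.mul_assoc]
      _ = X * A ^ (k + 1) := by rw [h2, Matrix.mul_assoc, ← pow_succ, h2]
      _ = A ^ k := h2
  have h_le : X.rank ≤ (A ^ k).rank := by
    rw [hZ]; exact Matrix.rank_mul_le_left _ _
  have h_ge : (A ^ k).rank ≤ (X ^ 2).rank := by
    rw [← hsq]; exact Matrix.rank_mul_le_left _ _
  have h_sq_le : (X ^ 2).rank ≤ X.rank := by
    rw [pow_two]; exact Matrix.rank_mul_le_left _ _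
  refine ⟨by omega, by omega, le_antisymm ?_ ?_⟩
  · rw [hZ, Matrix.mulVecLin_mul]
    exact LinearMap.range_comp_le_range _ _
  · rw [← h2, Matrix.mulVecLin_mul]
    exact LinearMap.range_comp_le_range _ _
end
end

section
/- Let A be an n×n complex matrix with Ind(A) = k that has an m-core-EP inverse. Suppose A = A₁ + A₂ is a core-EP decomposition of A, and let Y be an m-core inverse of A₁. Then Y is the m-core-EP inverse of A, i.e., Y satisfies the four m-core-EP inverse equations for A. -/
/-!
The m-core inverse `Y` of `A₁` acts on `A` as it does on `A₁`: since `Y = A₁ Y²` and `A₂ A₁ = 0`,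
one has `A₂ Y = 0` and so `A Y = A₁ Y`. The rank condition on `A₁` means that its range and kernel
meet trivially, which upgrades the defining equations of `Y` to `Y A₁² = A₁`
(`IsMCore.mul_sq`) and then `Y A₁ Y = Y` (`IsMCore.mul_mul_self`). Finally, nilpotency of `A₂`
forces `A^k = A₁ M` for some `M` (`add_pow_eq_of_mul_eq_zero`), hence `A^(k+1) = A₁² M` and
`Y A^(k+1) = A^k`, while iterating `Y = A Y²` gives `Y = A^k Y^(k+1)`.
-/

open Matrix

noncomputable section

/-- `Y` is an m-core inverse of `B`. -/
def IsMCore {n : ℕ} (B Y : Matrix (Fin n) (Fin n) ℂ) : Prop :=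
  B * Y * B = B ∧ B * Y ^ 2 = Y ∧ madj (B * Y) = B * Y

/-- `A = A₁ + A₂` is a core-EP decomposition of `A` (with `Ind(A) = k`). -/
def IsCoreEPDecomp {n : ℕ} (A A₁ A₂ : Matrix (Fin n) (Fin n) ℂ) (k : ℕ) : Prop :=
  A = A₁ + A₂ ∧ (A₁ ^ 2).rank = A₁.rank ∧ A₂ ^ k = 0 ∧ A₁ᴴ * A₂ = 0 ∧ A₂ * A₁ = 0

/-- If `rank (B²) = rank B`, then `B²` and `B` have the same kernel, here phrased for
matrices of column vectors. -/
lemma mul_eq_zero_of_rank_sq {n : ℕ} {B X : Matrix (Fin n) (Fin n) ℂ}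
    (hr : (B ^ 2).rank = B.rank) (h : B ^ 2 * X = 0) : B * X = 0 := by
  have hle : LinearMap.ker B.mulVecLin ≤ LinearMap.ker (B ^ 2).mulVecLin := by
    intro v hv
    simp only [LinearMap.mem_ker, mulVecLin_apply] at hv ⊢
    rw [pow_two, ← mulVec_mulVec, hv, mulVec_zero]
  have hker : LinearMap.ker B.mulVecLin = LinearMap.ker (B ^ 2).mulVecLin := by
    apply Submodule.eq_of_le_of_finrank_eq hle
    have h1 := LinearMap.finrank_range_add_finrank_ker B.mulVecLin
    have h2 := LinearMap.finrank_range_add_finrank_ker (B ^ 2).mulVecLin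
    unfold Matrix.rank at hr
    omega
  apply Matrix.ext_of_mulVec_single
  intro i
  have hi : X *ᵥ Pi.single i 1 ∈ LinearMap.ker (B ^ 2).mulVecLin := by
    simp only [LinearMap.mem_ker, mulVecLin_apply, mulVec_mulVec, h, zero_mulVec]
  rw [← hker, LinearMap.mem_ker, mulVecLin_apply, mulVec_mulVec] at hi
  rw [hi, zero_mulVec]

lemma IsMCore.mul_sq {n : ℕ} {B Y : Matrix (Fin n) (Fin n) ℂ} (hY : IsMCore B Y)
    (hr : (B ^ 2).rank = B.rank) : Y * B ^ 2 = B := by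
  obtain ⟨h1, h2, -⟩ := hY
  -- `Y B² - B` lies in the range of `B`, because `Y = B Y²`, and in its kernel.
  have hX : B * (Y ^ 2 * B ^ 2 - 1) = Y * B ^ 2 - B := by
    rw [mul_sub, ← mul_assoc, h2, mul_one]
  have h0 : B ^ 2 * (Y ^ 2 * B ^ 2 - 1) = 0 := by
    rw [pow_two B, mul_assoc, ← pow_two B, hX, mul_sub, pow_two B, ← mul_assoc, ← mul_assoc, h1,
      sub_self]
  have := mul_eq_zero_of_rank_sq hr h0
  rwa [hX, sub_eq_zero] at this

lemma IsMCore.mul_mul_self {n : ℕ} {B Y : Matrix (Fin n) (Fin n) ℂ} (hY : IsMCore B Y)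
    (hr : (B ^ 2).rank = B.rank) : Y * B * Y = Y := by
  calc Y * B * Y = Y * B * (B * Y ^ 2) := by rw [hY.2.1]
    _ = (Y * B ^ 2) * Y ^ 2 := by rw [pow_two B]; simp only [mul_assoc]
    _ = Y := by rw [hY.mul_sq hr, hY.2.1]

lemma add_pow_eq_of_mul_eq_zero {n : ℕ} {P Q : Matrix (Fin n) (Fin n) ℂ} (h : Q * P = 0) (m : ℕ) :
    ∃ M, (P + Q) ^ m = P * M + Q ^ m := by
  induction m with
  | zero => exact ⟨0, by simp⟩
  | succ m ih =>
    obtain ⟨M, hM⟩ := ih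
    refine ⟨P * M + Q ^ m, ?_⟩
    rw [pow_succ', hM, add_mul, mul_add Q, ← mul_assoc Q, h, zero_mul, zero_add, ← pow_succ']

/-- If `A` is m-core-EP invertible and `A = A₁ + A₂` is a core-EP decomposition,
then any m-core inverse of `A₁` is the m-core-EP inverse of `A`. -/
theorem mCoreEP_eq_mcore_of_coreEPDecomp {n k : ℕ}
    (A A₁ A₂ Y : Matrix (Fin n) (Fin n) ℂ) (hk : IsInd A k)
    (hex : ∃ X, IsMCoreEP A X k)
    (hdec : IsCoreEPDecomp A A₁ A₂ k)
    (hY : IsMCore A₁ Y) :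
    IsMCoreEP A Y k := by
  obtain ⟨rfl, hr, hnil, -, h21⟩ := hdec
  have h2Y : A₂ * Y = 0 := by
    rw [← hY.2.1, ← mul_assoc, h21, zero_mul]
  have hAY : (A₁ + A₂) * Y = A₁ * Y := by rw [add_mul, h2Y, add_zero]
  refine ⟨?_, ?_, ?_, Y ^ (k + 1), ?_⟩
  · rw [mul_assoc, hAY, ← mul_assoc, hY.mul_mul_self hr]
  · obtain ⟨M, hM⟩ := add_pow_eq_of_mul_eq_zero h21 k
    rw [hnil, add_zero] at hM
    rw [pow_succ', hM, add_mul, ← mul_assoc A₂, h21, zero_mul, add_zero, ← mul_assoc A₁,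
      ← pow_two, ← mul_assoc, hY.mul_sq hr]
  · rw [hAY, hY.2.2]
  · have hstep : (A₁ + A₂) * Y ^ 2 = Y := by
      rw [pow_two, ← mul_assoc, hAY, mul_assoc, ← pow_two, hY.2.1]
    have hiter : ∀ m : ℕ, (A₁ + A₂) ^ m * Y ^ (m + 1) = Y := by
      intro m
      induction m with
      | zero => simp
      | succ m ih =>
        calc (A₁ + A₂) ^ (m + 1) * Y ^ (m + 1 + 1)
            = (A₁ + A₂) ^ m * (((A₁ + A₂) * Y ^ 2) * Y ^ m) := by
              rw [pow_succ, mul_assoc, mul_assoc, ← pow_add, add_comm 2 m]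
          _ = Y := by rw [hstep, ← pow_succ', ih]
    exact (hiter k).symm
end
end

section
/- Let A be an n×n complex matrix with Ind(A) = k satisfying rank(A^k) = rank((A^k)~ A^k) = rank(A^k (A^k)~). Suppose A = A₁ + A₂ is a core-EP decomposition of A, let S be the group inverse of A₁, and let M be the Minkowski inverse of A₁. Then S A₁ M is the m-core-EP inverse of A, i.e., S A₁ M satisfies the four m-core-EP inverse equations for A. -/
/-!
Since `A₂ A₁ = 0`, also `A₂ S = A₂ A₁ S² = 0`, so `A (S A₁ M) = A₁ S A₁ M = A₁ M`. This gives the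
self-adjointness of `A X` and the identity `X A X = X` for `X = S A₁ M`. The other two equations
compare the column spaces of `A ^ k` and `A₁`: expanding `(A₁ + A₂) ^ k` with `A₂ A₁ = 0` and
`A₂ ^ k = 0` shows `A ^ k = A₁ W` (`pow_add_eq_left_mul`), and conversely
`A₁ S = A ^ k A₁ S ^ (k + 1)`, because `A` acts as `A₁` on the column space of `A₁`
(`pow_mul_mul_pow_succ`).
-/

open Matrix

noncomputable section

/-- With `b a = 0`, every term of `(a + b) ^ m` other than `b ^ m` starts with `a`. -/
theorem pow_add_eq_left_mul {R : Type*} [Ring R] {a b : R} (hba : b * a = 0) (m : ℕ) :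
    ∃ w, (a + b) ^ m = a * w + b ^ m := by
  induction m with
  | zero => exact ⟨0, by simp⟩
  | succ m ih =>
    obtain ⟨w, hw⟩ := ih
    refine ⟨a * w + b ^ m, ?_⟩
    have h : b * (a * w) = 0 := by rw [← mul_assoc, hba, zero_mul]
    rw [pow_succ', hw, add_mul, mul_add b, h, zero_add, ← pow_succ']

/-- For a commuting inner inverse `s` of `a`, this puts `a s` in the right ideal generated by
`(a + b) ^ m`, for every `m`. -/
theorem pow_mul_mul_pow_succ {R : Type*} [Ring R] {a b s : R} (hba : b * a = 0)
    (hasa : a * s * a = a) (hcomm : a * s = s * a) (m : ℕ) :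
    (a + b) ^ m * (a * s ^ (m + 1)) = a * s := by
  induction m with
  | zero => simp
  | succ m ih =>
    calc (a + b) ^ (m + 1) * (a * s ^ (m + 1 + 1))
        = (a + b) * ((a + b) ^ m * (a * s ^ (m + 1))) * s := by
          rw [pow_succ' (a + b), pow_succ s (m + 1)]; simp only [mul_assoc]
      _ = (a + b) * (a * s) * s := by rw [ih]
      _ = a * (a * s) * s := by rw [add_mul, ← mul_assoc b, hba, zero_mul, add_zero]
      _ = a * s := by rw [hcomm, ← mul_assoc, hasa, hcomm]

/-- If `rank(A^k) = rank((A^k)~ A^k) = rank(A^k (A^k)~)` and `A = A₁ + A₂` is a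
core-EP decomposition, `S` the group inverse of `A₁` and `M` the Minkowski
inverse of `A₁`, then `S A₁ M` is the m-core-EP inverse of `A`. -/
theorem mCoreEP_eq_group_mink {n k : ℕ}
    (A A₁ A₂ S M : Matrix (Fin n) (Fin n) ℂ) (hk : IsInd A k)
    (hrk1 : (A ^ k).rank = (madj (A ^ k) * A ^ k).rank)
    (hrk2 : (A ^ k).rank = (A ^ k * madj (A ^ k)).rank)
    (hdec : IsCoreEPDecomp A A₁ A₂ k)
    (hS : A₁ * S * A₁ = A₁ ∧ S * A₁ * S = S ∧ A₁ * S = S * A₁)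
    (hM : A₁ * M * A₁ = A₁ ∧ M * A₁ * M = M ∧
      madj (A₁ * M) = A₁ * M ∧ madj (M * A₁) = M * A₁) :
    IsMCoreEP A (S * A₁ * M) k := by
  obtain ⟨rfl, -, hnil, -, h21⟩ := hdec
  obtain ⟨hS1, hS2, hS3⟩ := hS
  obtain ⟨hM1, hM2, hM3, -⟩ := hM
  have h2S : A₂ * S = 0 := by
    rw [← hS2, ← hS3, mul_assoc, ← mul_assoc, h21, zero_mul]
  have hAX : (A₁ + A₂) * (S * A₁ * M) = A₁ * M := by
    have h : A₂ * (S * A₁ * M) = 0 := by rw [mul_assoc, ← mul_assoc, h2S, zero_mul]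
    rw [add_mul, h, add_zero, ← mul_assoc, ← mul_assoc, hS1]
  obtain ⟨W, hW⟩ := pow_add_eq_left_mul h21 k
  rw [hnil, add_zero] at hW
  refine ⟨?_, ?_, ?_, A₁ * S ^ (k + 1) * M, ?_⟩
  · rw [mul_assoc, hAX, mul_assoc (S * A₁), ← mul_assoc M, hM2]
  · have hpow : (A₁ + A₂) ^ (k + 1) = A₁ * (A₁ * W) := by
      rw [pow_succ', hW, add_mul, ← mul_assoc A₂, h21, zero_mul, add_zero]
    calc S * A₁ * M * (A₁ + A₂) ^ (k + 1)
        = S * (A₁ * M * A₁) * (A₁ * W) := by rw [hpow]; simp only [mul_assoc]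
      _ = A₁ * S * A₁ * W := by rw [hM1, hS3]; simp only [mul_assoc]
      _ = (A₁ + A₂) ^ k := by rw [hS1, hW]
  · rw [hAX, hM3]
  · rw [← mul_assoc, pow_mul_mul_pow_succ h21 hS1 hS3, hS3]
end
end

section
/- The m-core-EP order is not antisymmetric: for the 3×3 complex matrices A = [[1,2,3],[0,0,1],[0,0,0]] and B = [[1,2,3],[0,0,0],[0,0,0]] (with Minkowski metric G = diag(1,−1,−1)), both A and B have m-core-EP inverses, A ≤Ⓔ B and B ≤Ⓔ A hold, yet A ≠ B. -/
/-!
Both matrices have the same m-core-EP inverse, the matrix unit `E₁₁`. Indeed `A ^ 3 = A ^ 2` and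
`B ^ 2 = B`, where `A ^ 2` and `B` have range spanned by `e₁`, and `A`, `B` share their first row
`(1, 2, 3)` and their first column `e₁`. Hence `A E₁₁ = B E₁₁ = E₁₁` and `E₁₁ A = E₁₁ B = B`,
which gives both order relations: the difference `A - B = E₂₃` is annihilated by `E₁₁` on both
sides. The index of `B` is `1`; that of `A` is `2`, since `A e₃` lies in the range of `A` but not
in that of `A ^ 2` (`rank_sq_ne`).
-/

open Matrix

noncomputable section

/-- The m-core-EP order `A ≤Ⓔ B` (for `A` with `Ind(A) = k`): the m-core-EP
inverse `X` of `A` exists and satisfies `X A = X B` and `A X = B X`. -/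
def MCoreEPLE {n : ℕ} (A B : Matrix (Fin n) (Fin n) ℂ) (k : ℕ) : Prop :=
  ∃ X, IsMCoreEP A X k ∧ X * A = X * B ∧ A * X = B * X

lemma sq_eq : (!![1,2,3;0,0,1;0,0,0] : Matrix (Fin 3) (Fin 3) ℂ) ^ 2 =
    !![1,2,5;0,0,0;0,0,0] := by
  rw [pow_two]
  ext i j
  fin_cases i <;> fin_cases j <;> simp [Matrix.mul_apply, Fin.sum_univ_three] <;> norm_num

lemma cube_eq : (!![1,2,3;0,0,1;0,0,0] : Matrix (Fin 3) (Fin 3) ℂ) ^ 3 =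
    !![1,2,5;0,0,0;0,0,0] := by
  rw [pow_succ, sq_eq]
  ext i j
  fin_cases i <;> fin_cases j <;> simp [Matrix.mul_apply, Fin.sum_univ_three] <;> norm_num

lemma idem_sq_eq : (!![1,2,3;0,0,0;0,0,0] : Matrix (Fin 3) (Fin 3) ℂ) ^ 2 =
    !![1,2,3;0,0,0;0,0,0] := by
  rw [pow_two]
  ext i j
  fin_cases i <;> fin_cases j <;> simp [Matrix.mul_apply, Fin.sum_univ_three]

/-- The index of the first matrix is not `1`: equal ranks would force the nested ranges of its
square and of itself to coincide, but the range of the square lies in the line of `e₁`. -/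
lemma rank_sq_ne : ((!![1,2,3;0,0,1;0,0,0] : Matrix (Fin 3) (Fin 3) ℂ) ^ 2).rank ≠
    (!![1,2,3;0,0,1;0,0,0] : Matrix (Fin 3) (Fin 3) ℂ).rank := by
  intro h
  have hle : LinearMap.range ((!![1,2,3;0,0,1;0,0,0] : Matrix (Fin 3) (Fin 3) ℂ) ^ 2).mulVecLin ≤
      LinearMap.range (!![1,2,3;0,0,1;0,0,0] : Matrix (Fin 3) (Fin 3) ℂ).mulVecLin := by
    rw [pow_two, Matrix.mulVecLin_mul]
    exact LinearMap.range_comp_le_range _ _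
  have heq := Submodule.eq_of_le_of_finrank_eq hle h
  have hmem := LinearMap.mem_range_self
    (!![1,2,3;0,0,1;0,0,0] : Matrix (Fin 3) (Fin 3) ℂ).mulVecLin ![0, 0, 1]
  rw [← heq, sq_eq] at hmem
  obtain ⟨v, hv⟩ := hmem
  have h1 := congrFun hv 1
  simp [Matrix.mulVec, dotProduct, Fin.sum_univ_three] at h1

lemma madj_unit : madj (!![1,0,0;0,0,0;0,0,0] : Matrix (Fin 3) (Fin 3) ℂ) =
    !![1,0,0;0,0,0;0,0,0] := by
  ext i j
  fin_cases i <;> fin_cases j <;>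
    simp [madj, mink, Matrix.mul_apply, Matrix.diagonal_apply]

/-- Right multiplication by `E₁₁` extracts the first column, which here is `e₁`. -/
lemma mul_unit (a b c : ℂ) : (!![1,a,b;0,0,c;0,0,0] : Matrix (Fin 3) (Fin 3) ℂ) *
    !![1,0,0;0,0,0;0,0,0] = !![1,0,0;0,0,0;0,0,0] := by
  ext i j
  fin_cases i <;> fin_cases j <;> simp [Matrix.mul_apply, Fin.sum_univ_three]

/-- Left multiplication by `E₁₁` keeps only the first row. -/
lemma unit_mul (a b c : ℂ) : (!![1,0,0;0,0,0;0,0,0] : Matrix (Fin 3) (Fin 3) ℂ) *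
    !![1,a,b;0,0,c;0,0,0] = !![1,a,b;0,0,0;0,0,0] := by
  ext i j
  fin_cases i <;> fin_cases j <;> simp [Matrix.mul_apply, Fin.sum_univ_three]

/-- The m-core-EP order is not antisymmetric: for
`A = !![1,2,3;0,0,1;0,0,0]` and `B = !![1,2,3;0,0,0;0,0,0]`, both are
m-core-EP invertible, `A ≤Ⓔ B` and `B ≤Ⓔ A`, yet `A ≠ B`. -/
theorem mCoreEPLE_not_antisymm :
    (∃ k, IsInd (!![1,2,3;0,0,1;0,0,0] : Matrix (Fin 3) (Fin 3) ℂ) k ∧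
      MCoreEPLE (!![1,2,3;0,0,1;0,0,0] : Matrix (Fin 3) (Fin 3) ℂ)
        (!![1,2,3;0,0,0;0,0,0] : Matrix (Fin 3) (Fin 3) ℂ) k) ∧
    (∃ t, IsInd (!![1,2,3;0,0,0;0,0,0] : Matrix (Fin 3) (Fin 3) ℂ) t ∧
      MCoreEPLE (!![1,2,3;0,0,0;0,0,0] : Matrix (Fin 3) (Fin 3) ℂ)
        (!![1,2,3;0,0,1;0,0,0] : Matrix (Fin 3) (Fin 3) ℂ) t) ∧
    (!![1,2,3;0,0,1;0,0,0] : Matrix (Fin 3) (Fin 3) ℂ) ≠ !![1,2,3;0,0,0;0,0,0] := by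
  refine ⟨⟨2, ⟨by norm_num, by rw [cube_eq, sq_eq], ?_⟩, !![1,0,0;0,0,0;0,0,0],
      ⟨?_, ?_, ?_, !![1,0,0;0,0,0;0,0,0], ?_⟩, ?_, ?_⟩,
    ⟨1, ⟨one_pos, by rw [idem_sq_eq, pow_one], fun j hj _ => hj⟩, !![1,0,0;0,0,0;0,0,0],
      ⟨?_, ?_, ?_, !![1,0,0;0,0,0;0,0,0], ?_⟩, ?_, ?_⟩, ?_⟩
  · intro j hj h
    by_contra! hlt
    obtain rfl : j = 1 := by omega
    rw [pow_one] at h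
    exact rank_sq_ne h
  · rw [unit_mul, mul_unit]
  · rw [cube_eq, sq_eq, unit_mul]
  · rw [mul_unit, madj_unit]
  · rw [sq_eq, mul_unit]
  · rw [unit_mul, unit_mul]
  · rw [mul_unit, mul_unit]
  · rw [unit_mul, mul_unit]
  · rw [idem_sq_eq, pow_one, unit_mul]
  · rw [mul_unit, madj_unit]
  · rw [pow_one, mul_unit]
  · rw [unit_mul, unit_mul]
  · rw [mul_unit, mul_unit]
  · intro h
    have h12 := congrFun (congrFun h 1) 2
    simp at h12
end
end

section
/- Let A be an n×n complex matrix with Ind(A) = k and suppose A = U · [[T, S], [0, N]] · U*, where U is an n×n unitary matrix, T is an invertible r×r matrix with r = rank(A^k), and N is an (n−r)×(n−r) matrix with N^k = 0. Write U* G U = [[G₁, G₂], [G₃, G₄]] with G₁ of size r×r. Then rank(A^k) = rank((A^k)~ A^k) if and only if G₁ is invertible. -/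
/-!
Since `U` is unitary and `N ^ k = 0`, one has `A ^ k = U [[T ^ k, S'], [0, 0]] U*` for some `S'`.
The factors `G`, `U`, `U*` are invertible, so `(A ^ k)~ A ^ k` has the rank of
`M* (U* G U) M`, where `M = [[T ^ k, S'], [0, 0]]` (`rank_madj_mul_self`). This product equals
`R* G₁ R` with `R = [T ^ k, S']`, and `R` has a right inverse because `T` is invertible, so its rank
is that of `G₁` (`rank_congr_fromBlocks`). As `rank (A ^ k) = r` is the size of `G₁`, equality of
the ranks says that `G₁` has full rank, i.e. is invertible.
-/

open Matrix

noncomputable section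

/-- Regard a 2×2 block matrix with blocks of sizes `r` and `n - r` as an
`n × n` matrix (given `r ≤ n`). -/
def embedBlocks {n r : ℕ} (hr : r ≤ n)
    (M : Matrix (Fin r ⊕ Fin (n - r)) (Fin r ⊕ Fin (n - r)) ℂ) :
    Matrix (Fin n) (Fin n) ℂ :=
  Matrix.reindex (finSumFinEquiv.trans (finCongr (Nat.add_sub_cancel' hr)))
    (finSumFinEquiv.trans (finCongr (Nat.add_sub_cancel' hr))) M

/-- Block matrices multiply after embedding, since `embedBlocks` is a reindexing along an
equivalence. -/
lemma embedBlocks_mul {n r : ℕ} (hr : r ≤ n)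
    (M M' : Matrix (Fin r ⊕ Fin (n - r)) (Fin r ⊕ Fin (n - r)) ℂ) :
    embedBlocks hr (M * M') = embedBlocks hr M * embedBlocks hr M' :=
  map_mul (Matrix.reindexAlgEquiv ℂ ℂ
    (finSumFinEquiv.trans (finCongr (Nat.add_sub_cancel' hr)))) M M'

lemma embedBlocks_one {n r : ℕ} (hr : r ≤ n) :
    embedBlocks hr 1 = (1 : Matrix (Fin n) (Fin n) ℂ) :=
  Matrix.submatrix_one_equiv (finSumFinEquiv.trans (finCongr (Nat.add_sub_cancel' hr))).symm

lemma embedBlocks_pow {n r : ℕ} (hr : r ≤ n)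
    (M : Matrix (Fin r ⊕ Fin (n - r)) (Fin r ⊕ Fin (n - r)) ℂ) (k : ℕ) :
    embedBlocks hr (M ^ k) = embedBlocks hr M ^ k := by
  induction k with
  | zero => simp [embedBlocks_one]
  | succ k ih => rw [pow_succ, pow_succ, embedBlocks_mul, ih]

lemma embedBlocks_conjTranspose {n r : ℕ} (hr : r ≤ n)
    (M : Matrix (Fin r ⊕ Fin (n - r)) (Fin r ⊕ Fin (n - r)) ℂ) :
    embedBlocks hr Mᴴ = (embedBlocks hr M)ᴴ := by
  simp [embedBlocks]

lemma rank_embedBlocks {n r : ℕ} (hr : r ≤ n)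
    (M : Matrix (Fin r ⊕ Fin (n - r)) (Fin r ⊕ Fin (n - r)) ℂ) :
    (embedBlocks hr M).rank = M.rank :=
  Matrix.rank_reindex _ _ _

lemma exists_fromBlocks_pow {l m : Type*} [Fintype l] [Fintype m] [DecidableEq l] [DecidableEq m]
    (T : Matrix l l ℂ) (S : Matrix l m ℂ) (N : Matrix m m ℂ) (k : ℕ) :
    ∃ S', Matrix.fromBlocks T S 0 N ^ k = Matrix.fromBlocks (T ^ k) S' 0 (N ^ k) := by
  induction k with
  | zero => exact ⟨0, by simp⟩
  | succ k ih =>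
    obtain ⟨S', h⟩ := ih
    exact ⟨T ^ k * S + S' * N, by simp [pow_succ, h, Matrix.fromBlocks_multiply]⟩

lemma isUnit_of_rank_eq_card {l : Type*} [Fintype l] [DecidableEq l] (M : Matrix l l ℂ)
    (h : M.rank = Fintype.card l) : IsUnit M := by
  rw [← Matrix.mulVec_surjective_iff_isUnit]
  have : LinearMap.range M.mulVecLin = ⊤ := by
    apply Submodule.eq_top_of_finrank_eq
    rw [Module.finrank_fintype_fun_eq_card]
    exact h
  exact LinearMap.range_eq_top.mp this

/-- Congruence by a matrix `[[P, Q], [0, 0]]` with `P` invertible sees only the top-left block of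
the middle factor, and preserves its rank. -/
lemma rank_congr_fromBlocks {l m : Type*} [Fintype l] [Fintype m] [DecidableEq l] [DecidableEq m]
    {P : Matrix l l ℂ} (hP : IsUnit P) (Q : Matrix l m ℂ)
    (G₁ : Matrix l l ℂ) (G₂ : Matrix l m ℂ) (G₃ : Matrix m l ℂ) (G₄ : Matrix m m ℂ) :
    ((Matrix.fromBlocks P Q 0 0)ᴴ * Matrix.fromBlocks G₁ G₂ G₃ G₄ *
      Matrix.fromBlocks P Q 0 0).rank = G₁.rank := by
  have hR : (Matrix.fromBlocks P Q 0 0)ᴴ * Matrix.fromBlocks G₁ G₂ G₃ G₄ *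
      Matrix.fromBlocks P Q (0 : Matrix m l ℂ) 0 =
      (Matrix.fromCols P Q)ᴴ * (G₁ * Matrix.fromCols P Q) := by
    simp [Matrix.fromBlocks_conjTranspose, Matrix.fromBlocks_multiply,
      Matrix.conjTranspose_fromCols_eq_fromRows_conjTranspose, Matrix.mul_fromCols,
      Matrix.mul_assoc]
  rw [hR]
  apply le_antisymm
  · exact (Matrix.rank_mul_le_right _ _).trans (Matrix.rank_mul_le_left _ _)
  · -- `[P⁻¹; 0]` is a right inverse of the row block `[P, Q]`.
    set R := Matrix.fromCols P Q
    set Y : Matrix (l ⊕ m) l ℂ := Matrix.fromRows P⁻¹ 0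
    have hY : R * Y = 1 := by
      have := Matrix.mul_nonsing_inv P ((Matrix.isUnit_iff_isUnit_det P).mp hP)
      simp [R, Y, Matrix.fromCols_mul_fromRows, this]
    have hG : Yᴴ * (Rᴴ * (G₁ * R)) * Y = G₁ := by
      have : Yᴴ * (Rᴴ * (G₁ * R)) * Y = (R * Y)ᴴ * G₁ * (R * Y) := by
        simp only [Matrix.conjTranspose_mul, Matrix.mul_assoc]
      rw [this, hY]; simp
    calc G₁.rank = (Yᴴ * (Rᴴ * (G₁ * R)) * Y).rank := by rw [hG]
      _ ≤ (Yᴴ * (Rᴴ * (G₁ * R))).rank := Matrix.rank_mul_le_left _ _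
      _ ≤ (Rᴴ * (G₁ * R)).rank := Matrix.rank_mul_le_right _ _

lemma isUnit_mink (n : ℕ) : IsUnit (mink n) := by
  have h : mink n * mink n = 1 := by
    rw [mink, Matrix.diagonal_mul_diagonal, ← Matrix.diagonal_one]
    congr 1
    ext i
    split_ifs <;> simp
  exact ⟨⟨mink n, mink n, h, h⟩, rfl⟩

/-- Conjugating by the unitary `U` turns `B~ B` into `M* (U* G U) M`, up to multiplication by
the invertible matrices `G U` on the left and `U*` on the right. -/
lemma rank_madj_mul_self {n : ℕ} (B M U : Matrix (Fin n) (Fin n) ℂ)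
    (hU : U ∈ Matrix.unitaryGroup (Fin n) ℂ) (hB : B = U * M * Uᴴ) :
    (madj B * B).rank = (Mᴴ * (Uᴴ * mink n * U) * M).rank := by
  have h1 : Uᴴ * U = 1 := Matrix.mem_unitaryGroup_iff'.mp hU
  have h2 : U * Uᴴ = 1 := Matrix.mem_unitaryGroup_iff.mp hU
  have hUu : IsUnit U := ⟨⟨U, Uᴴ, h2, h1⟩, rfl⟩
  have hUs : IsUnit Uᴴ := ⟨⟨Uᴴ, U, h1, h2⟩, rfl⟩
  have h : madj B * B = mink n * U * (Mᴴ * (Uᴴ * mink n * U) * M * Uᴴ) := by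
    subst hB
    simp only [madj, Matrix.conjTranspose_mul, Matrix.conjTranspose_conjTranspose,
      Matrix.mul_assoc]
  rw [h, Matrix.rank_mul_eq_right_of_isUnit_det _ _
      ((Matrix.isUnit_iff_isUnit_det _).mp ((isUnit_mink n).mul hUu)),
    Matrix.rank_mul_eq_left_of_isUnit_det _ _ ((Matrix.isUnit_iff_isUnit_det _).mp hUs)]

/-- With `A = U [[T,S],[0,N]] U*`, `r = rank(A^k)`, and
`U* G U = [[G₁,G₂],[G₃,G₄]]`: `rank(A^k) = rank((A^k)~ A^k)` iff `G₁` is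
invertible. -/
theorem rank_pow_eq_iff_isUnit_block {n r k : ℕ} (hr : r ≤ n)
    (A U : Matrix (Fin n) (Fin n) ℂ) (hU : U ∈ Matrix.unitaryGroup (Fin n) ℂ)
    (T : Matrix (Fin r) (Fin r) ℂ) (S : Matrix (Fin r) (Fin (n - r)) ℂ)
    (N : Matrix (Fin (n - r)) (Fin (n - r)) ℂ)
    (G₁ : Matrix (Fin r) (Fin r) ℂ) (G₂ : Matrix (Fin r) (Fin (n - r)) ℂ)
    (G₃ : Matrix (Fin (n - r)) (Fin r) ℂ) (G₄ : Matrix (Fin (n - r)) (Fin (n - r)) ℂ)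
    (hInd : IsInd A k)
    (hA : A = U * embedBlocks hr (Matrix.fromBlocks T S 0 N) * Uᴴ)
    (hT : IsUnit T) (hrk : (A ^ k).rank = r) (hN : N ^ k = 0)
    (hG : Uᴴ * mink n * U = embedBlocks hr (Matrix.fromBlocks G₁ G₂ G₃ G₄)) :
    (A ^ k).rank = (madj (A ^ k) * A ^ k).rank ↔ IsUnit G₁ := by
  have h1 : Uᴴ * U = 1 := Matrix.mem_unitaryGroup_iff'.mp hU
  have h2 : U * Uᴴ = 1 := Matrix.mem_unitaryGroup_iff.mp hU
  obtain ⟨S', hS'⟩ := exists_fromBlocks_pow T S N k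
  have hpow : A ^ k = U * embedBlocks hr (Matrix.fromBlocks (T ^ k) S' 0 0) * Uᴴ := by
    have := Units.conj_pow (⟨U, Uᴴ, h2, h1⟩ : (Matrix (Fin n) (Fin n) ℂ)ˣ)
      (embedBlocks hr (Matrix.fromBlocks T S 0 N)) k
    rw [hN] at hS'
    rw [hA, ← hS', embedBlocks_pow]
    exact this
  have hrank : (madj (A ^ k) * A ^ k).rank = G₁.rank := by
    rw [rank_madj_mul_self _ _ U hU hpow, hG, ← embedBlocks_conjTranspose, ← embedBlocks_mul,
      ← embedBlocks_mul, rank_embedBlocks, rank_congr_fromBlocks (hT.pow k)]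
  rw [hrank, hrk]
  constructor
  · intro h
    exact isUnit_of_rank_eq_card G₁ (by rw [← h, Fintype.card_fin])
  · intro h
    rw [Matrix.rank_of_isUnit G₁ h, Fintype.card_fin]
end
end
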